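/- The 8×8 integer matrix ĉ₁ defined in the context, viewed as a matrix over ℂ, has eight distinct complex eigenvalues; equivalently, its characteristic polynomial has eight distinct roots in ℂ. -/

import Mathlib

open Matrix Polynomial

noncomputable section

/-- The matrix of quantum multiplication by c₁(−K_Z) on QH*(Z(α₁,α₂,α₁)),
with all quantum parameters set to 1. -/
def c1hat : Matrix (Fin 8) (Fin 8) ℤ :=
  !![0, 2, 2, -2, 0, 0, 3, 4;
     3, -1, 2, 1, 2, 4, 0, 3;
     1, 1, -1, -1, 0, 0, 2, 0;
     2, 0, 1, 0, 2, 2, 0, 0;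
     0, 1, 4, 0, -1, 1, 0, 2;
     0, 2, 0, -1, 1, -1, 0, 0;
     0, 0, 2, 3, 0, 1, 0, 2;
     0, 0, 0, 0, 2, 3, 2, 0]

/-- ĉ₁ viewed as a complex matrix. -/
def c1hatC : Matrix (Fin 8) (Fin 8) ℂ := c1hat.map (fun n => (n : ℂ))

lemma aux_eig (z : ℂ) (hz : (2337)*z^0 + (-538)*z^1 + (-1540)*z^2 + (-1528)*z^3 + (-506)*z^4 + (-142)*z^5 + (-20)*z^6 + (4)*z^7 + (1)*z^8 = 0) : c1hatC.charpoly.IsRoot z := by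
  rw [Polynomial.IsRoot, Matrix.eval_charpoly]
  apply Matrix.exists_mulVec_eq_zero_iff.mp
  refine ⟨![(1133034364645)*z^0 + (914410486705)*z^1 + (646340551450)*z^2 + (121227424835)*z^3 + (54041884525)*z^4 + (15786976715)*z^5 + (-1280979340)*z^6 + (-594093355)*z^7,
    (-2072441888631)*z^0 + (-1471226264169)*z^1 + (-583817040567)*z^2 + (-131849913102)*z^3 + (5705429697)*z^4 + (4756776957)*z^5 + (183311871)*z^6 + (12717366)*z^7,
    (1736889792393)*z^0 + (1667081796807)*z^1 + (749499161376)*z^2 + (226349311776)*z^3 + (55227387159)*z^4 + (4783161999)*z^5 + (-1759229598)*z^6 + (-336419118)*z^7,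
    (420559015045)*z^0 + (838056821590)*z^1 + (869254584190)*z^2 + (353973932045)*z^3 + (108948594565)*z^4 + (12588812480)*z^5 + (-3065851240)*z^6 + (-631849045)*z^7,
    (1074980984070)*z^0 + (0)*z^1 + (0)*z^2 + (0)*z^3 + (0)*z^4 + (0)*z^5 + (0)*z^6 + (0)*z^7,
    (-2338144635829)*z^0 + (-1707639270691)*z^1 + (-1088585485993)*z^2 + (-282507459008)*z^3 + (-64526420467)*z^4 + (-8565542627)*z^5 + (2136509929)*z^6 + (493075384)*z^7,
    (1941533905095)*z^0 + (2308925351385)*z^1 + (1352613294885)*z^2 + (413198240580)*z^3 + (80274952785)*z^4 + (2142046605)*z^5 + (-2836316865)*z^6 + (-400222650)*z^7,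
    (-730995830521)*z^0 + (-1207240334149)*z^1 + (-662797059472)*z^2 + (-245519937497)*z^3 + (-81044278933)*z^4 + (-7661941163)*z^5 + (2358548296)*z^6 + (419941861)*z^7], ?_, ?_⟩
  · intro h
    have h4 : (1074980984070)*z^0 + (0)*z^1 + (0)*z^2 + (0)*z^3 + (0)*z^4 + (0)*z^5 + (0)*z^6 + (0)*z^7 = 0 := congrFun h 4
    norm_num at h4
  · ext i
    fin_cases i
    · simp [c1hatC, c1hat, Matrix.mulVec, dotProduct, Fin.sum_univ_eight, Matrix.sub_apply, Matrix.scalar_apply]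
      linear_combination (-594093355) * hz
    · simp [c1hatC, c1hat, Matrix.mulVec, dotProduct, Fin.sum_univ_eight, Matrix.sub_apply, Matrix.scalar_apply]
      linear_combination (12717366) * hz
    · simp [c1hatC, c1hat, Matrix.mulVec, dotProduct, Fin.sum_univ_eight, Matrix.sub_apply, Matrix.scalar_apply]
      linear_combination (-336419118) * hz
    · simp [c1hatC, c1hat, Matrix.mulVec, dotProduct, Fin.sum_univ_eight, Matrix.sub_apply, Matrix.scalar_apply]
      linear_combination (-631849045) * hz
    · simp [c1hatC, c1hat, Matrix.mulVec, dotProduct, Fin.sum_univ_eight, Matrix.sub_apply, Matrix.scalar_apply]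
      linear_combination (0) * hz
    · simp [c1hatC, c1hat, Matrix.mulVec, dotProduct, Fin.sum_univ_eight, Matrix.sub_apply, Matrix.scalar_apply]
      linear_combination (493075384) * hz
    · simp [c1hatC, c1hat, Matrix.mulVec, dotProduct, Fin.sum_univ_eight, Matrix.sub_apply, Matrix.scalar_apply]
      linear_combination (-400222650) * hz
    · simp [c1hatC, c1hat, Matrix.mulVec, dotProduct, Fin.sum_univ_eight, Matrix.sub_apply, Matrix.scalar_apply]
      linear_combination (419941861) * hz

lemma aux_sep (z : ℂ) (hz : (2337)*z^0 + (-538)*z^1 + (-1540)*z^2 + (-1528)*z^3 + (-506)*z^4 + (-142)*z^5 + (-20)*z^6 + (4)*z^7 + (1)*z^8 = 0) (hd : (-538)*z^0 + (-3080)*z^1 + (-4584)*z^2 + (-2024)*z^3 + (-710)*z^4 + (-120)*z^5 + (28)*z^6 + (8)*z^7 = 0) : False := by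
  have : (21869613546315920766092481078200 : ℂ) = 0 := by
    linear_combination ((9127814105154020583335687126)*z^0 + (135483884558545635494938508)*z^1 + (401060226390847459857714152)*z^2 + (-86868271103973376739841356)*z^3 + (-198680621630789121972551368)*z^4 + (-4508893835841462022988824)*z^5 + (7704763825447200132144592)*z^6) * hz + ((-999836398830807923488810901)*z^0 + (-2815319780596010258991432724)*z^1 + (115220583126127104870938368)*z^2 + (-950440160912013918223042)*z^3 + (40780181020682171499330197)*z^4 + (31617778046309806734502722)*z^5 + (82063990389732744614566)*z^6 + (-963095478180900016518074)*z^7) * hd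
  norm_num at this

/-- The characteristic polynomial, explicitly. -/
def pol : ℂ[X] := C (2337) * X^0 + C (-538) * X^1 + C (-1540) * X^2 + C (-1528) * X^3 + C (-506) * X^4 + C (-142) * X^5 + C (-20) * X^6 + C (4) * X^7 + X^8

lemma pol_deg : pol.natDegree = 8 := by
  unfold pol; compute_degree!

lemma pol_ne : pol ≠ 0 := by
  intro h; have := pol_deg; simp [h] at this

lemma pol_nodup : pol.roots.Nodup := by
  rw [Multiset.nodup_iff_count_le_one]
  intro z
  rw [Polynomial.count_roots]
  by_contra hc
  push Not at hc
  obtain ⟨h1, h2⟩ := (Polynomial.one_lt_rootMultiplicity_iff_isRoot pol_ne).mp hc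
  apply aux_sep z
  · simp [pol] at h1
    linear_combination h1
  · simp [pol] at h2
    linear_combination h2

theorem stmt_9 : c1hatC.charpoly.roots.toFinset.card = 8 := by
  have hne : c1hatC.charpoly ≠ 0 := (Matrix.charpoly_monic _).ne_zero
  apply le_antisymm
  · refine (Multiset.toFinset_card_le _).trans ((Polynomial.card_roots' _).trans ?_)
    simp [Matrix.charpoly_natDegree_eq_dim]
  · have h8 : pol.roots.toFinset.card = 8 := by
      rw [Multiset.toFinset_card_of_nodup pol_nodup, ← pol_deg]
      exact (IsAlgClosed.splits pol).natDegree_eq_card_roots.symm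
    refine h8.ge.trans (Finset.card_le_card ?_)
    intro z hz
    rw [Multiset.mem_toFinset, Polynomial.mem_roots pol_ne] at hz
    rw [Multiset.mem_toFinset, Polynomial.mem_roots hne]
    apply aux_eig
    simp [pol] at hz
    linear_combination hz
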